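/- For all t, s ∈ ℝ, −Φ₁₁(t,s)⁻¹Φ₁₂(t,s) = ∫ₛᵗ Φ₁₁(τ,s)⁻¹ B(τ)B(τ)ᵀ Φ₁₁(τ,s)⁻ᵀ dτ (the blocks Φ₁₁(τ,s) being invertible for all τ, s). -/

import Mathlib

open Matrix

/-- `IsSTM F Φ`: `Φ` is the state transition matrix of `F`, i.e. for each fixed `s`,
`t ↦ Φ t s` solves `X' = F t * X`, `X s = 1` (derivatives taken entrywise). -/
def IsSTM {ι : Type*} [Fintype ι] [DecidableEq ι] (F : ℝ → Matrix ι ι ℝ)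
    (Φ : ℝ → ℝ → Matrix ι ι ℝ) : Prop :=
  (∀ s : ℝ, Φ s s = 1) ∧
  ∀ (s t : ℝ) (i j : ι), HasDerivAt (fun t' : ℝ => Φ t' s i j) ((F t * Φ t s) i j) t

/-!
Put `P = B Bᵀ`. The coefficient matrix of the Hamiltonian system lies in the symplectic Lie algebra,
so `z ⬝ J w` is constant for any two solutions `z`, `w`, and `Φ(t, s)` is symplectic.

*Invertibility of `Φ₁₁`.* If `Φ₁₁(t, s) v = 0`, let `(x, y) = Φ(·, s) (v, 0)`. The energy `x ⬝ y`
vanishes at `s` and at `t`, and its derivative is `-(y ⬝ P y + x ⬝ Q x) ≤ 0`, so `P y = 0` and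
`Q x = 0` between `s` and `t`. There `(x, 0)` is itself a solution, and it vanishes at `t`. Its
pairing with every column of `Φ(·, s)` is constant, hence zero, and at `s` this says `v = 0`.
Pairing with `Φ` thus replaces the uniqueness theorem for linear equations.

*Integral formula.* For a symplectic matrix with invertible upper-left block, the Schur complement
`Φ₂₂ - Φ₂₁ Φ₁₁⁻¹ Φ₁₂` is `Φ₁₁⁻ᵀ`, so `-Φ₁₁⁻¹ Φ₁₂` has derivative `Φ₁₁⁻¹ P Φ₁₁⁻ᵀ`. This is positive
semidefinite, and everywhere-defined derivatives with nonnegative values are integrable.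
-/

section Calculus

variable {𝕜 ι : Type*} [NontriviallyNormedField 𝕜] {t : 𝕜}

theorem hasDerivAt_matrix_iff {κ : Type*} [Finite ι] [Finite κ] {W : 𝕜 → Matrix ι κ 𝕜}
    {W' : Matrix ι κ 𝕜} :
    HasDerivAt W W' t ↔ ∀ i j, HasDerivAt (fun τ => W τ i j) (W' i j) t :=
  have := Fintype.ofFinite ι
  have := Fintype.ofFinite κ
  hasDerivAt_pi.trans (forall_congr' fun _ => hasDerivAt_pi)

variable [Fintype ι]

theorem hasDerivAt_matrix_mul {κ l : Type*} [Finite κ] [Finite l] {X : 𝕜 → Matrix κ ι 𝕜}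
    {Y : 𝕜 → Matrix ι l 𝕜} {X' : Matrix κ ι 𝕜} {Y' : Matrix ι l 𝕜}
    (hX : HasDerivAt X X' t) (hY : HasDerivAt Y Y' t) :
    HasDerivAt (fun τ => X τ * Y τ) (X' * Y t + X t * Y') t := by
  refine hasDerivAt_matrix_iff.2 fun i j => ?_
  simp only [mul_apply, Matrix.add_apply, ← Finset.sum_add_distrib]
  exact HasDerivAt.fun_sum fun k _ =>
    (hasDerivAt_matrix_iff.1 hX i k).mul (hasDerivAt_matrix_iff.1 hY k j)

theorem hasDerivAt_dotProduct {x y : 𝕜 → ι → 𝕜} {x' y' : ι → 𝕜}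
    (hx : HasDerivAt x x' t) (hy : HasDerivAt y y' t) :
    HasDerivAt (fun τ => x τ ⬝ᵥ y τ) (x' ⬝ᵥ y t + x t ⬝ᵥ y') t := by
  simp only [dotProduct, ← Finset.sum_add_distrib]
  exact HasDerivAt.fun_sum fun i _ => (hasDerivAt_pi.1 hx i).mul (hasDerivAt_pi.1 hy i)

theorem hasDerivAt_const_mulVec {κ : Type*} [Finite κ] (K : Matrix κ ι 𝕜) {x : 𝕜 → ι → 𝕜}
    {x' : ι → 𝕜} (hx : HasDerivAt x x' t) :
    HasDerivAt (fun τ => K *ᵥ x τ) (K *ᵥ x') t :=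
  have := Fintype.ofFinite κ
  hasDerivAt_pi.2 fun i => HasDerivAt.fun_sum fun j _ => (hasDerivAt_pi.1 hx j).const_mul (K i j)

open scoped Matrix.Norms.Operator in
theorem hasDerivAt_matrix_inv [CompleteSpace 𝕜] [DecidableEq ι] {X : 𝕜 → Matrix ι ι 𝕜}
    {X' : Matrix ι ι 𝕜} (hX : HasDerivAt X X' t) (hu : IsUnit (X t)) :
    HasDerivAt (fun τ => (X τ)⁻¹) (-((X t)⁻¹ * X' * (X t)⁻¹)) t := by
  obtain ⟨u, hu⟩ := hu
  have : @CompleteSpace (Matrix ι ι 𝕜) PseudoMetricSpace.toUniformSpace :=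
    FiniteDimensional.complete 𝕜 _
  have hinv := hasFDerivAt_ringInverse (𝕜 := 𝕜) u
  rw [hu] at hinv
  have hcomp := hinv.comp_hasDerivAt t hX
  simp only [Function.comp_def, ← nonsing_inv_eq_ringInverse, coe_units_inv, hu] at hcomp
  exact hcomp

theorem eq_of_hasDerivAt_eq_zero_uIcc {f : ℝ → ℝ} {a b : ℝ}
    (hf : ∀ t ∈ Set.uIcc a b, HasDerivAt f 0 t) : f a = f b := by
  have := intervalIntegral.integral_eq_sub_of_hasDerivAt hf intervalIntegrable_const
  rw [intervalIntegral.integral_zero] at this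
  linarith

theorem hasDerivAt_eq_zero_of_antitone {f : ℝ → ℝ} {f' a b t : ℝ} (hanti : Antitone f)
    (hne : a ≠ b) (hab : f a = f b) (ht : t ∈ Set.uIcc a b) (hf : HasDerivAt f f' t) : f' = 0 := by
  have hconst : ∀ τ ∈ Set.uIcc a b, f τ = f a := fun τ hτ => by
    simpa [← hab] using hanti.mapsTo_uIcc hτ
  exact (uniqueDiffOn_uIcc hne t ht).eq_deriv _ hf.hasDerivWithinAt
    ((hasDerivWithinAt_const t _ (f a)).congr hconst (hconst t ht))

end Calculus

section PosSemidef

/-- The quadratic forms `v ⬝ W' v` are integrable as nonnegative derivatives, the entries of `W'` by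
polarization. -/
theorem intervalIntegrable_of_hasDerivAt_posSemidef {ι : Type*} [Finite ι]
    {W W' : ℝ → Matrix ι ι ℝ} (hW : ∀ t, HasDerivAt W (W' t) t)
    (hpos : ∀ t, (W' t).PosSemidef) (a b : ℝ) (i j : ι) :
    IntervalIntegrable (fun t => W' t i j) MeasureTheory.volume a b := by
  classical
  have := Fintype.ofFinite ι
  have hquad : ∀ v : ι → ℝ,
      IntervalIntegrable (fun t => v ⬝ᵥ W' t *ᵥ v) MeasureTheory.volume a b := by
    intro v
    have hderiv : ∀ t, HasDerivAt (fun τ => v ⬝ᵥ W τ *ᵥ v) (v ⬝ᵥ W' t *ᵥ v) t := fun t => by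
      simp only [dotProduct, mulVec]
      exact HasDerivAt.fun_sum fun k _ => (HasDerivAt.fun_sum fun l _ =>
        (hasDerivAt_matrix_iff.1 (hW t) k l).mul_const (v l)).const_mul (v k)
    exact intervalIntegral.intervalIntegrable_deriv_of_nonneg
      (fun t _ => (hderiv t).continuousAt.continuousWithinAt) (fun t _ => hderiv t)
      fun t _ => by simpa using (hpos t).dotProduct_mulVec_nonneg v
  have hpolar : ∀ t, W' t i j = ((Pi.single i 1 + Pi.single j 1) ⬝ᵥ
      W' t *ᵥ (Pi.single i 1 + Pi.single j 1) - Pi.single i 1 ⬝ᵥ W' t *ᵥ Pi.single i 1 -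
      Pi.single j 1 ⬝ᵥ W' t *ᵥ Pi.single j 1) / 2 := fun t => by
    have hsymm : W' t j i = W' t i j := by simpa using (hpos t).isHermitian.apply i j
    simp only [mulVec_add, add_dotProduct, dotProduct_add, single_one_dotProduct,
      mulVec_single_one, col_apply, hsymm]
    ring
  simp only [hpolar]
  exact (((hquad _).sub (hquad _)).sub (hquad _)).div_const 2

theorem integral_eq_sub_of_hasDerivAt_posSemidef {ι : Type*} [Finite ι]
    {W W' : ℝ → Matrix ι ι ℝ} (hW : ∀ t, HasDerivAt W (W' t) t)
    (hpos : ∀ t, (W' t).PosSemidef) (a b : ℝ) (i j : ι) :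
    ∫ t in a..b, W' t i j = W b i j - W a i j :=
  intervalIntegral.integral_eq_sub_of_hasDerivAt
    (fun t _ => hasDerivAt_matrix_iff.1 (hW t) i j)
    (intervalIntegrable_of_hasDerivAt_posSemidef hW hpos a b i j)

end PosSemidef

section LinearSystem

variable {ι : Type*} [Fintype ι] {K : Matrix ι ι ℝ}

theorem hasDerivAt_dotProduct_mulVec_of_isSkewAdjoint {F : Matrix ι ι ℝ} (hF : K.IsSkewAdjoint F)
    {z w : ℝ → ι → ℝ} {t : ℝ} (hz : HasDerivAt z (F *ᵥ z t) t) (hw : HasDerivAt w (F *ᵥ w t) t) :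
    HasDerivAt (fun τ => z τ ⬝ᵥ K *ᵥ w τ) 0 t := by
  have hF : Fᵀ * K = K * -F := hF
  refine (hasDerivAt_dotProduct hz (hasDerivAt_const_mulVec K hw)).congr_deriv ?_
  calc F *ᵥ z t ⬝ᵥ K *ᵥ w t + z t ⬝ᵥ K *ᵥ F *ᵥ w t
      = z t ⬝ᵥ (Fᵀ * K) *ᵥ w t + z t ⬝ᵥ (K * F) *ᵥ w t := by
        rw [← vecMul_transpose, ← dotProduct_mulVec, mulVec_mulVec, mulVec_mulVec]
    _ = 0 := by rw [hF, Matrix.mul_neg, neg_mulVec, dotProduct_neg, neg_add_cancel]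

namespace IsSTM

variable [DecidableEq ι] {F : ℝ → Matrix ι ι ℝ} {Φ : ℝ → ℝ → Matrix ι ι ℝ}

theorem hasDerivAt_mulVec (hΦ : IsSTM F Φ) (s t : ℝ) (v : ι → ℝ) :
    HasDerivAt (fun τ => Φ τ s *ᵥ v) (F t *ᵥ Φ t s *ᵥ v) t := by
  rw [mulVec_mulVec]
  exact hasDerivAt_pi.2 fun i =>
    HasDerivAt.fun_sum fun j _ => (hΦ.2 s t i j).mul_const (v j)

theorem dotProduct_mulVec_eq (hΦ : IsSTM F Φ) (hF : ∀ t, K.IsSkewAdjoint (F t)) {z : ℝ → ι → ℝ}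
    {s t : ℝ} (hz : ∀ τ ∈ Set.uIcc s t, HasDerivAt z (F τ *ᵥ z τ) τ) (w : ι → ℝ) :
    z t ⬝ᵥ K *ᵥ Φ t s *ᵥ w = z s ⬝ᵥ K *ᵥ w := by
  have := eq_of_hasDerivAt_eq_zero_uIcc fun τ hτ =>
    hasDerivAt_dotProduct_mulVec_of_isSkewAdjoint (hF τ) (hz τ hτ) (hΦ.hasDerivAt_mulVec s τ w)
  rw [← this, hΦ.1, one_mulVec]

theorem transpose_mul_mul_eq (hΦ : IsSTM F Φ) (hF : ∀ t, K.IsSkewAdjoint (F t)) (t s : ℝ) :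
    (Φ t s)ᵀ * K * Φ t s = K := by
  refine ext_of_mulVec_single fun j => dotProduct_eq _ _ fun v => ?_
  have := hΦ.dotProduct_mulVec_eq hF (s := s) (t := t)
    (fun τ _ => hΦ.hasDerivAt_mulVec s τ v) (Pi.single j 1)
  rwa [hΦ.1, one_mulVec, ← vecMul_transpose, ← dotProduct_mulVec, mulVec_mulVec, mulVec_mulVec,
    dotProduct_comm, dotProduct_comm v] at this

theorem eq_zero_of_eq_zero (hΦ : IsSTM F Φ) (hF : ∀ t, K.IsSkewAdjoint (F t)) (hK : IsUnit K)
    {z : ℝ → ι → ℝ} {s t : ℝ} (hz : ∀ τ ∈ Set.uIcc s t, HasDerivAt z (F τ *ᵥ z τ) τ)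
    (hzt : z t = 0) : z s = 0 := by
  have hzK : z s ᵥ* K = 0 := dotProduct_eq_zero _ fun w => by
    rw [← dotProduct_mulVec, ← hΦ.dotProduct_mulVec_eq hF hz w, hzt, zero_dotProduct]
  exact vecMul_injective_of_isUnit hK (hzK.trans (zero_vecMul K).symm)

end IsSTM

end LinearSystem

section Symplectic

open LieAlgebra.Symplectic

variable {m R : Type*} [Fintype m] [DecidableEq m] [CommRing R]

theorem mem_sp_iff_isSkewAdjoint {F : Matrix (m ⊕ m) (m ⊕ m) R} :
    F ∈ sp m R ↔ (J m R).IsSkewAdjoint F := by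
  rw [sp, mem_skewAdjointMatricesLieSubalgebra, mem_skewAdjointMatricesSubmodule]

theorem IsSTM.mem_symplecticGroup {F : ℝ → Matrix (m ⊕ m) (m ⊕ m) ℝ}
    {Φ : ℝ → ℝ → Matrix (m ⊕ m) (m ⊕ m) ℝ} (hΦ : IsSTM F Φ) (hF : ∀ t, F t ∈ sp m ℝ) (t s : ℝ) :
    Φ t s ∈ symplecticGroup m ℝ :=
  SymplecticGroup.mem_iff'.2
    (hΦ.transpose_mul_mul_eq (fun τ => mem_sp_iff_isSkewAdjoint.1 (hF τ)) t s)

theorem sub_mul_inv_mul_eq_of_mem_symplecticGroup {X U Y V : Matrix m m R}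
    (h : fromBlocks X U Y V ∈ symplecticGroup m R) (hX : IsUnit X) :
    V - Y * X⁻¹ * U = (X⁻¹)ᵀ := by
  rw [SymplecticGroup.mem_iff, J, fromBlocks_transpose, fromBlocks_multiply,
    fromBlocks_multiply] at h
  simp only [Matrix.mul_zero, Matrix.mul_one, Matrix.mul_neg, zero_add, add_zero, Matrix.neg_mul,
    fromBlocks_inj] at h
  obtain ⟨hXU, -, hVX, -⟩ := h
  have hdet : IsUnit X.det := (isUnit_iff_isUnit_det X).1 hX
  have hXT : Xᵀ * (X⁻¹)ᵀ = 1 := by rw [← transpose_mul, nonsing_inv_mul X hdet, transpose_one]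
  have hsymm : X⁻¹ * U = Uᵀ * (X⁻¹)ᵀ := calc
    X⁻¹ * U = X⁻¹ * (U * Xᵀ) * (X⁻¹)ᵀ := by
      rw [Matrix.mul_assoc, Matrix.mul_assoc, hXT, Matrix.mul_one]
    _ = X⁻¹ * (X * Uᵀ) * (X⁻¹)ᵀ := by rw [add_neg_eq_zero.1 hXU]
    _ = Uᵀ * (X⁻¹)ᵀ := by rw [nonsing_inv_mul_cancel_left X _ hdet]
  calc V - Y * X⁻¹ * U = V * (Xᵀ * (X⁻¹)ᵀ) - Y * (Uᵀ * (X⁻¹)ᵀ) := by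
        rw [hXT, Matrix.mul_one, Matrix.mul_assoc, hsymm]
    _ = (V * Xᵀ + -(Y * Uᵀ)) * (X⁻¹)ᵀ := by noncomm_ring
    _ = (X⁻¹)ᵀ := by rw [hVX, Matrix.one_mul]

end Symplectic

section Hamiltonian

variable {m R : Type*} [Fintype m] [CommRing R]

/-- The coefficient matrix of the Hamiltonian system `x' = A x - P y`, `y' = -Q x - Aᵀ y`, with
`P` in place of `B Bᵀ`. -/
def hamiltonianMatrix (A P Q : Matrix m m R) : Matrix (m ⊕ m) (m ⊕ m) R :=
  fromBlocks A (-P) (-Q) (-Aᵀ)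

theorem hamiltonianMatrix_mem_sp [DecidableEq m] (A : Matrix m m R) {P Q : Matrix m m R}
    (hP : P.IsSymm) (hQ : Q.IsSymm) :
    hamiltonianMatrix A P Q ∈ LieAlgebra.Symplectic.sp m R := by
  rw [mem_sp_iff_isSkewAdjoint]
  simp [Matrix.IsSkewAdjoint, IsAdjointPair, hamiltonianMatrix, J, fromBlocks_transpose,
    fromBlocks_multiply, fromBlocks_neg, hP.eq, hQ.eq]

theorem hamiltonianMatrix_mul_toBlocks₁₁ (A P Q : Matrix m m R) (Z : Matrix (m ⊕ m) (m ⊕ m) R) :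
    (hamiltonianMatrix A P Q * Z).toBlocks₁₁ = A * Z.toBlocks₁₁ - P * Z.toBlocks₂₁ := by
  conv_lhs => rw [← fromBlocks_toBlocks Z, hamiltonianMatrix, fromBlocks_multiply]
  rw [toBlocks_fromBlocks₁₁, Matrix.neg_mul, sub_eq_add_neg]

theorem hamiltonianMatrix_mul_toBlocks₁₂ (A P Q : Matrix m m R) (Z : Matrix (m ⊕ m) (m ⊕ m) R) :
    (hamiltonianMatrix A P Q * Z).toBlocks₁₂ = A * Z.toBlocks₁₂ - P * Z.toBlocks₂₂ := by
  conv_lhs => rw [← fromBlocks_toBlocks Z, hamiltonianMatrix, fromBlocks_multiply]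
  rw [toBlocks_fromBlocks₁₂, Matrix.neg_mul, sub_eq_add_neg]

theorem hamiltonianMatrix_mulVec (A P Q : Matrix m m R) (z : m ⊕ m → R) :
    hamiltonianMatrix A P Q *ᵥ z =
      Sum.elim (A *ᵥ (z ∘ Sum.inl) - P *ᵥ (z ∘ Sum.inr))
        (-(Q *ᵥ (z ∘ Sum.inl)) - Aᵀ *ᵥ (z ∘ Sum.inr)) := by
  simp only [hamiltonianMatrix, fromBlocks_mulVec, neg_mulVec, sub_eq_add_neg]

variable {A P Q : Matrix m m ℝ} {z : ℝ → m ⊕ m → ℝ} {t : ℝ}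

theorem hasDerivAt_inl_of_hamiltonian (hz : HasDerivAt z (hamiltonianMatrix A P Q *ᵥ z t) t) :
    HasDerivAt (fun τ => z τ ∘ Sum.inl) (A *ᵥ (z t ∘ Sum.inl) - P *ᵥ (z t ∘ Sum.inr)) t := by
  rw [hamiltonianMatrix_mulVec] at hz
  exact hasDerivAt_pi.2 fun i => hasDerivAt_pi.1 hz (Sum.inl i)

theorem hasDerivAt_inr_of_hamiltonian (hz : HasDerivAt z (hamiltonianMatrix A P Q *ᵥ z t) t) :
    HasDerivAt (fun τ => z τ ∘ Sum.inr) (-(Q *ᵥ (z t ∘ Sum.inl)) - Aᵀ *ᵥ (z t ∘ Sum.inr)) t := by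
  rw [hamiltonianMatrix_mulVec] at hz
  exact hasDerivAt_pi.2 fun i => hasDerivAt_pi.1 hz (Sum.inr i)

theorem hasDerivAt_inl_dotProduct_inr_of_hamiltonian
    (hz : HasDerivAt z (hamiltonianMatrix A P Q *ᵥ z t) t) :
    HasDerivAt (fun τ => (z τ ∘ Sum.inl) ⬝ᵥ (z τ ∘ Sum.inr))
      (-((z t ∘ Sum.inr) ⬝ᵥ P *ᵥ (z t ∘ Sum.inr) +
        (z t ∘ Sum.inl) ⬝ᵥ Q *ᵥ (z t ∘ Sum.inl))) t := by
  refine (hasDerivAt_dotProduct (hasDerivAt_inl_of_hamiltonian hz)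
    (hasDerivAt_inr_of_hamiltonian hz)).congr_deriv ?_
  rw [sub_dotProduct, dotProduct_sub, dotProduct_neg, mulVec_transpose,
    dotProduct_comm _ (_ ᵥ* A), ← dotProduct_mulVec, dotProduct_comm (A *ᵥ _),
    dotProduct_comm (P *ᵥ _)]
  ring

theorem hasDerivAt_sumElim_inl_zero_of_hamiltonian
    (hz : HasDerivAt z (hamiltonianMatrix A P Q *ᵥ z t) t)
    (hP : P *ᵥ (z t ∘ Sum.inr) = 0) (hQ : Q *ᵥ (z t ∘ Sum.inl) = 0) :
    HasDerivAt (fun τ => Sum.elim (z τ ∘ Sum.inl) (0 : m → ℝ))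
      (hamiltonianMatrix A P Q *ᵥ Sum.elim (z t ∘ Sum.inl) 0) t := by
  have hx := hasDerivAt_inl_of_hamiltonian hz
  rw [hP, sub_zero] at hx
  simp only [hamiltonianMatrix_mulVec, Sum.elim_comp_inl, Sum.elim_comp_inr, mulVec_zero, hQ,
    neg_zero, sub_zero]
  exact hasDerivAt_pi.2 <| Sum.rec (hasDerivAt_pi.1 hx) fun _ => hasDerivAt_const t 0

end Hamiltonian

section Riccati

variable {m : Type*} [Fintype m] {A P Q : ℝ → Matrix m m ℝ}

theorem mulVec_eq_zero_of_hamiltonian_energy_eq (hP : ∀ t, (P t).PosSemidef)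
    (hQ : ∀ t, (Q t).PosSemidef) {z : ℝ → m ⊕ m → ℝ}
    (hz : ∀ t, HasDerivAt z (hamiltonianMatrix (A t) (P t) (Q t) *ᵥ z t) t) {a b : ℝ} (hne : a ≠ b)
    (hab : (z a ∘ Sum.inl) ⬝ᵥ (z a ∘ Sum.inr) = (z b ∘ Sum.inl) ⬝ᵥ (z b ∘ Sum.inr))
    {t : ℝ} (ht : t ∈ Set.uIcc a b) :
    P t *ᵥ (z t ∘ Sum.inr) = 0 ∧ Q t *ᵥ (z t ∘ Sum.inl) = 0 := by
  have henergy := fun τ => hasDerivAt_inl_dotProduct_inr_of_hamiltonian (hz τ)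
  have hPnonneg : ∀ τ, 0 ≤ (z τ ∘ Sum.inr) ⬝ᵥ P τ *ᵥ (z τ ∘ Sum.inr) := fun τ => by
    simpa using (hP τ).dotProduct_mulVec_nonneg (z τ ∘ Sum.inr)
  have hQnonneg : ∀ τ, 0 ≤ (z τ ∘ Sum.inl) ⬝ᵥ Q τ *ᵥ (z τ ∘ Sum.inl) := fun τ => by
    simpa using (hQ τ).dotProduct_mulVec_nonneg (z τ ∘ Sum.inl)
  have hanti := antitone_of_hasDerivAt_nonpos henergy fun τ =>
    neg_nonpos.2 (add_nonneg (hPnonneg τ) (hQnonneg τ))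
  have hzero := hasDerivAt_eq_zero_of_antitone hanti hne hab ht (henergy t)
  obtain ⟨hPzero, hQzero⟩ :=
    (add_eq_zero_iff_of_nonneg (hPnonneg t) (hQnonneg t)).1 (neg_eq_zero.1 hzero)
  exact ⟨((hP t).dotProduct_mulVec_zero_iff _).1 (by simpa using hPzero),
    ((hQ t).dotProduct_mulVec_zero_iff _).1 (by simpa using hQzero)⟩

variable [DecidableEq m] {Φ : ℝ → ℝ → Matrix (m ⊕ m) (m ⊕ m) ℝ}

namespace IsSTM

theorem isUnit_toBlocks₁₁ (hΦ : IsSTM (fun t => hamiltonianMatrix (A t) (P t) (Q t)) Φ)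
    (hP : ∀ t, (P t).PosSemidef) (hQ : ∀ t, (Q t).PosSemidef) (t s : ℝ) :
    IsUnit (Φ t s).toBlocks₁₁ := by
  rcases eq_or_ne s t with rfl | hne
  · rw [hΦ.1, ← fromBlocks_one, toBlocks_fromBlocks₁₁]
    exact isUnit_one
  refine mulVec_injective_iff_isUnit.1 <|
    (injective_iff_map_eq_zero (Φ t s).toBlocks₁₁.mulVecLin).2 fun v hv => ?_
  let z τ := Φ τ s *ᵥ Sum.elim v 0
  have hz : ∀ τ, HasDerivAt z (hamiltonianMatrix (A τ) (P τ) (Q τ) *ᵥ z τ) τ := fun τ =>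
    hΦ.hasDerivAt_mulVec s τ _
  have hzs : z s = Sum.elim v 0 := by simp only [z, hΦ.1, one_mulVec]
  have hzt : z t ∘ Sum.inl = 0 := by
    rw [mulVecLin_apply] at hv
    simp only [z]
    rw [← fromBlocks_toBlocks (Φ t s), fromBlocks_mulVec]
    simp [hv]
  have hkernel : ∀ τ ∈ Set.uIcc s t, P τ *ᵥ (z τ ∘ Sum.inr) = 0 ∧ Q τ *ᵥ (z τ ∘ Sum.inl) = 0 :=
    fun τ hτ => mulVec_eq_zero_of_hamiltonian_energy_eq hP hQ hz hne (by simp [hzs, hzt]) hτ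
  have hzero := hΦ.eq_zero_of_eq_zero
    (fun τ => mem_sp_iff_isSkewAdjoint.1 <|
      hamiltonianMatrix_mem_sp (A τ) (isHermitian_iff_isSymm.1 (hP τ).isHermitian)
        (isHermitian_iff_isSymm.1 (hQ τ).isHermitian))
    ((isUnit_iff_isUnit_det _).2 (isUnit_det_J m ℝ))
    (fun τ hτ =>
      hasDerivAt_sumElim_inl_zero_of_hamiltonian (hz τ) (hkernel τ hτ).1 (hkernel τ hτ).2)
    (by rw [hzt, Sum.elim_zero_zero])
  simpa [hzs] using congrArg (· ∘ Sum.inl) hzero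

theorem hasDerivAt_toBlocks₁₁ (hΦ : IsSTM (fun t => hamiltonianMatrix (A t) (P t) (Q t)) Φ)
    (s t : ℝ) :
    HasDerivAt (fun τ => (Φ τ s).toBlocks₁₁)
      (A t * (Φ t s).toBlocks₁₁ - P t * (Φ t s).toBlocks₂₁) t := by
  rw [← hamiltonianMatrix_mul_toBlocks₁₁ _ _ (Q t)]
  exact hasDerivAt_matrix_iff.2 fun i j => hΦ.2 s t (Sum.inl i) (Sum.inl j)

theorem hasDerivAt_toBlocks₁₂ (hΦ : IsSTM (fun t => hamiltonianMatrix (A t) (P t) (Q t)) Φ)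
    (s t : ℝ) :
    HasDerivAt (fun τ => (Φ τ s).toBlocks₁₂)
      (A t * (Φ t s).toBlocks₁₂ - P t * (Φ t s).toBlocks₂₂) t := by
  rw [← hamiltonianMatrix_mul_toBlocks₁₂ _ _ (Q t)]
  exact hasDerivAt_matrix_iff.2 fun i j => hΦ.2 s t (Sum.inl i) (Sum.inr j)

theorem hasDerivAt_inv_mul_toBlocks
    (hΦ : IsSTM (fun t => hamiltonianMatrix (A t) (P t) (Q t)) Φ)
    (hP : ∀ t, (P t).IsSymm) (hQ : ∀ t, (Q t).IsSymm) {s t : ℝ}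
    (hX : IsUnit (Φ t s).toBlocks₁₁) :
    HasDerivAt (fun τ => (Φ τ s).toBlocks₁₁⁻¹ * (Φ τ s).toBlocks₁₂)
      (-((Φ t s).toBlocks₁₁⁻¹ * P t * ((Φ t s).toBlocks₁₁⁻¹)ᵀ)) t := by
  have hsymplectic := hΦ.mem_symplecticGroup
    (fun τ => hamiltonianMatrix_mem_sp (A τ) (hP τ) (hQ τ)) t s
  rw [← fromBlocks_toBlocks (Φ t s)] at hsymplectic
  have hderiv := hasDerivAt_matrix_mul
    (hasDerivAt_matrix_inv (hΦ.hasDerivAt_toBlocks₁₁ s t) hX) (hΦ.hasDerivAt_toBlocks₁₂ s t)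
  convert hderiv using 1
  symm
  rw [← sub_mul_inv_mul_eq_of_mem_symplecticGroup hsymplectic hX]
  generalize (Φ t s).toBlocks₁₁ = X at hX ⊢
  generalize (Φ t s).toBlocks₁₂ = U, (Φ t s).toBlocks₂₁ = Y, (Φ t s).toBlocks₂₂ = V
  calc -(X⁻¹ * (A t * X - P t * Y) * X⁻¹) * U + X⁻¹ * (A t * U - P t * V)
      = X⁻¹ * A t * U - X⁻¹ * A t * (X * X⁻¹) * U - X⁻¹ * P t * (V - Y * X⁻¹ * U) := by
        noncomm_ring
    _ = -(X⁻¹ * P t * (V - Y * X⁻¹ * U)) := by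
        rw [mul_nonsing_inv X ((isUnit_iff_isUnit_det X).1 hX), Matrix.mul_one, sub_self, zero_sub]

end IsSTM

theorem stmt_3_general (hP : ∀ t, (P t).PosSemidef) (hQ : ∀ t, (Q t).PosSemidef)
    (hΦ : IsSTM (fun t => hamiltonianMatrix (A t) (P t) (Q t)) Φ) (t s : ℝ) :
    (∀ τ σ : ℝ, IsUnit (Φ τ σ).toBlocks₁₁) ∧
    ∀ i j : m,
      (-((Φ t s).toBlocks₁₁⁻¹ * (Φ t s).toBlocks₁₂)) i j =
        ∫ τ in s..t, ((Φ τ s).toBlocks₁₁⁻¹ * P τ * ((Φ τ s).toBlocks₁₁⁻¹)ᵀ) i j := by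
  have hunit := hΦ.isUnit_toBlocks₁₁ hP hQ
  have hderiv : ∀ τ, HasDerivAt (fun σ => -((Φ σ s).toBlocks₁₁⁻¹ * (Φ σ s).toBlocks₁₂))
      ((Φ τ s).toBlocks₁₁⁻¹ * P τ * ((Φ τ s).toBlocks₁₁⁻¹)ᵀ) τ := fun τ => by
    have h := hΦ.hasDerivAt_inv_mul_toBlocks (fun τ => isHermitian_iff_isSymm.1 (hP τ).isHermitian)
      (fun τ => isHermitian_iff_isSymm.1 (hQ τ).isHermitian) (hunit τ s)
    exact hasDerivAt_matrix_iff.2 fun i j => by simpa using (hasDerivAt_matrix_iff.1 h i j).fun_neg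
  have hpos : ∀ τ, ((Φ τ s).toBlocks₁₁⁻¹ * P τ * ((Φ τ s).toBlocks₁₁⁻¹)ᵀ).PosSemidef := fun τ => by
    simpa using (hP τ).mul_mul_conjTranspose_same (Φ τ s).toBlocks₁₁⁻¹
  have hs : (Φ s s).toBlocks₁₂ = 0 := by rw [hΦ.1, ← fromBlocks_one, toBlocks_fromBlocks₁₂]
  refine ⟨hunit, fun i j => ?_⟩
  rw [integral_eq_sub_of_hasDerivAt_posSemidef hderiv hpos]
  simp [hs]

end Riccati

theorem stmt_3 {n p : ℕ} (hn : 1 ≤ n) (hp : 1 ≤ p)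
    (A Q : ℝ → Matrix (Fin n) (Fin n) ℝ) (B : ℝ → Matrix (Fin n) (Fin p) ℝ)
    (hA : Continuous A) (hB : Continuous B) (hQ : Continuous Q)
    (hQpsd : ∀ t, (Q t).PosSemidef)
    (Φ : ℝ → ℝ → Matrix (Fin n ⊕ Fin n) (Fin n ⊕ Fin n) ℝ)
    (hΦ : IsSTM (fun t => fromBlocks (A t) (-(B t * (B t)ᵀ)) (-(Q t)) (-(A t)ᵀ)) Φ)
    (t s : ℝ) :
    (∀ τ σ : ℝ, IsUnit ((Φ τ σ).toBlocks₁₁)) ∧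
    ∀ i j : Fin n,
      (-(((Φ t s).toBlocks₁₁)⁻¹ * (Φ t s).toBlocks₁₂)) i j =
        ∫ τ in s..t,
          (((Φ τ s).toBlocks₁₁)⁻¹ * (B τ * (B τ)ᵀ) * ((((Φ τ s).toBlocks₁₁)⁻¹)ᵀ)) i j :=
  stmt_3_general (fun τ => by simpa using posSemidef_self_mul_conjTranspose (B τ)) hQpsd hΦ t s
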